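/- Let B be a set of m + p − 1 column indices of A whose columns are linearly independent, containing exactly r interdependent variables whose independent arcs form a spanning forest of G with components T_1, …, T_{r−p+1}, and let D be the associated r×r matrix. Let L and U partition the remaining column indices, with every nonbasic slack variable belonging to L. Suppose x̄ ∈ ℝ^{n+p} satisfies A x̄ = (b, β) (the first m components of the right-hand side being b and the last p being β), x̄_j = 0 for every j ∈ L, and x̄_e = u_e for every arc e ∈ U. For each tree T_h define the net requirement b(T_h) = Σ_{i ∈ T_h} b_i + Σ u_e over arcs e ∈ U with s(e) ∉ T_h and t(e) ∈ T_h, minus Σ u_e over arcs e ∈ U with s(e) ∈ T_h and t(e) ∉ T_h. For each interdependence t with parent arc e_P, child arc e_C, and constants α_t, β_t define b(t) = β_t + (α_t u_{e_P} if e_P ∈ U, else 0) − (u_{e_C} if e_C ∈ U, else 0). Let b̃ = (b(T_1), …, b(T_{r−p}), b(1), …, b(p)) ∈ ℝ^r. Then the subvector x̃ of x̄ consisting of the components of the interdependent variables in B, ordered as the columns of D, satisfies D x̃ = b̃. -/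

import Mathlib

open Matrix

noncomputable section

/-- Node–arc incidence matrix of the directed multigraph given by `src`, `tgt`. -/
def incidenceMatrix (m n : ℕ) (src tgt : Fin n → Fin m) : Matrix (Fin m) (Fin n) ℝ :=
  Matrix.of fun i e => if src e = i then (1 : ℝ) else if tgt e = i then -1 else 0

/-- Interdependence matrix `Q̂`: row `k` has `-α k` in the parent column and `1` in the
child column. -/
def interMatrix (n p : ℕ) (parent child : Fin p → Fin n) (α : Fin p → ℝ) :
    Matrix (Fin p) (Fin n) ℝ :=
  Matrix.of fun k e => if e = parent k then -α k else if e = child k then (1 : ℝ) else 0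

/-- The constraint matrix `A = [[Â, 0], [Q̂, I]]`. -/
def constraintMatrix (m n p : ℕ) (src tgt : Fin n → Fin m)
    (parent child : Fin p → Fin n) (α : Fin p → ℝ) :
    Matrix (Fin m ⊕ Fin p) (Fin n ⊕ Fin p) ℝ :=
  Matrix.fromBlocks (incidenceMatrix m n src tgt) 0 (interMatrix n p parent child α) 1

/-- A column index of `A` is an *interdependent variable* if it is a slack variable or an
arc appearing in some interdependence pair. -/
def interVar (n p : ℕ) (parent child : Fin p → Fin n) : Fin n ⊕ Fin p → Prop
  | Sum.inl e => ∃ k, parent k = e ∨ child k = e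
  | Sum.inr _ => True

/-- `δ_e^T`. -/
def deltaCoef (m n : ℕ) (src tgt : Fin n → Fin m) (e : Fin n) (T : Finset (Fin m)) : ℝ :=
  if src e ∈ T ∧ tgt e ∉ T then 1 else if src e ∉ T ∧ tgt e ∈ T then -1 else 0

/-- The `r × r` matrix `D` associated with a candidate basis: rows are indexed by the
trees `T_1, …, T_{r-p}` followed by the `p` interdependencies; columns are indexed by
the interdependent variables of `B`, enumerated by `col`. -/
def Dmat (m n p : ℕ) (src tgt : Fin n → Fin m) (parent child : Fin p → Fin n)
    (α : Fin p → ℝ) (r : ℕ) (T : Fin (r - p + 1) → Finset (Fin m))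
    (col : Fin r → Fin n ⊕ Fin p) :
    Matrix (Fin (r - p) ⊕ Fin p) (Fin r) ℝ :=
  Matrix.of fun row j =>
    match row, col j with
    | Sum.inl h, Sum.inl e => deltaCoef m n src tgt e (T h.castSucc)
    | Sum.inl _, Sum.inr _ => 0
    | Sum.inr k, Sum.inl e => interMatrix n p parent child α k e
    | Sum.inr k, Sum.inr k' => if k = k' then (1 : ℝ) else 0

/-- The independent arcs contained in `B` form an acyclic undirected subgraph of `G`. -/
def NoIndepCycle (m n p : ℕ) (src tgt : Fin n → Fin m) (parent child : Fin p → Fin n)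
    (B : Finset (Fin n ⊕ Fin p)) : Prop :=
  ¬ ∃ (k : ℕ) (_ : 1 ≤ k) (e : Fin k → Fin n) (v : Fin (k + 1) → Fin m),
      Function.Injective e ∧
      (∀ i, ¬ interVar n p parent child (Sum.inl (e i))) ∧
      (∀ i, Sum.inl (e i) ∈ B) ∧
      v 0 = v (Fin.last k) ∧
      ∀ i : Fin k, ({src (e i), tgt (e i)} : Set (Fin m)) = {v i.castSucc, v i.succ}

/-- Reachability in the undirected subgraph formed by the independent arcs of `B`. -/
def indepReach (m n p : ℕ) (src tgt : Fin n → Fin m) (parent child : Fin p → Fin n)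
    (B : Finset (Fin n ⊕ Fin p)) : Fin m → Fin m → Prop :=
  Relation.ReflTransGen fun a b => ∃ e, Sum.inl e ∈ B ∧
    ¬ interVar n p parent child (Sum.inl e) ∧
    ((src e = a ∧ tgt e = b) ∨ (src e = b ∧ tgt e = a))

/-- Reduced cost vector `c^π = c̄ − Aᵀ π` (slack variables get cost `0`). -/
def reducedCost (m n p : ℕ) (src tgt : Fin n → Fin m) (parent child : Fin p → Fin n)
    (α : Fin p → ℝ) (c : Fin n → ℝ) (π : Fin m ⊕ Fin p → ℝ) : Fin n ⊕ Fin p → ℝ :=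
  fun j => Sum.elim c (fun _ => (0 : ℝ)) j
    - (constraintMatrix m n p src tgt parent child α)ᵀ.mulVec π j


lemma key_sum (n p : ℕ) (parent child : Fin p → Fin n) (u : Fin n → ℝ)
    (B : Finset (Fin n ⊕ Fin p)) (r : ℕ)
    (col : Fin r → Fin n ⊕ Fin p)
    (hcolinj : Function.Injective col)
    (hcolrange : ∀ j : Fin n ⊕ Fin p,
      j ∈ Set.range col ↔ j ∈ B ∧ interVar n p parent child j)
    (L U : Finset (Fin n ⊕ Fin p))
    (hLU : Disjoint L U) (hLUcover : L ∪ U = Bᶜ)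
    (hslackL : ∀ k : Fin p, Sum.inr k ∉ B → Sum.inr k ∈ L)
    (x : Fin n ⊕ Fin p → ℝ)
    (hxL : ∀ j ∈ L, x j = 0)
    (hxU : ∀ e : Fin n, Sum.inl e ∈ U → x (Sum.inl e) = u e)
    (w : Fin n ⊕ Fin p → ℝ)
    (hw : ∀ j ∈ B, ¬ interVar n p parent child j → w j = 0) :
    ∑ i, w (col i) * x (col i) = ∑ j, w j * x j
      - ∑ e, if Sum.inl e ∈ U then w (Sum.inl e) * u e else 0 := by
  classical
  have hcov : ∀ j, (j ∈ L ∨ j ∈ U) ↔ j ∉ B := by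
    intro j
    rw [← Finset.mem_union, hLUcover, Finset.mem_compl]
  have h1 : ∑ i, w (col i) * x (col i)
      = ∑ j, if j ∈ Set.range col then w j * x j else 0 := by
    rw [← Finset.sum_filter]
    rw [← Finset.sum_image (s := Finset.univ) (g := col) (f := fun j => w j * x j)
      (fun a _ b _ h => hcolinj h)]
    congr 1
    ext j
    simp
  have h2 : (∑ e : Fin n, if Sum.inl e ∈ U then w (Sum.inl e) * u e else 0)
      = ∑ j, if j ∈ U then w j * x j else 0 := by
    rw [Fintype.sum_sum_type]
    have : ∀ k : Fin p, (Sum.inr k : Fin n ⊕ Fin p) ∉ U := by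
      intro k hk
      exact Finset.disjoint_left.mp hLU (hslackL k ((hcov _).mp (Or.inr hk))) hk
    simp only [this, if_false, Finset.sum_const_zero, add_zero]
    refine Finset.sum_congr rfl fun e _ => ?_
    split_ifs with h
    · rw [hxU e h]
    · rfl
  rw [h1, h2, ← Finset.sum_sub_distrib]
  refine Finset.sum_congr rfl fun j _ => ?_
  have hc := hcov j
  have hr := hcolrange j
  by_cases hB : j ∈ B
  · have hU : j ∉ U := fun h => (hc.mp (Or.inr h)) hB
    by_cases hv : interVar n p parent child j
    · rw [if_pos (hr.mpr ⟨hB, hv⟩), if_neg hU, sub_zero]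
    · rw [if_neg (fun h => hv (hr.mp h).2), if_neg hU, hw j hB hv]
      simp
  · rw [if_neg (fun h => hB (hr.mp h).1)]
    rcases hc.mpr hB with h | h
    · rw [hxL j h]; simp
    · rw [if_pos h, sub_self]

lemma sum_incidence (m n : ℕ) (src tgt : Fin n → Fin m) (hst : ∀ e, src e ≠ tgt e)
    (e : Fin n) (S : Finset (Fin m)) :
    ∑ i ∈ S, incidenceMatrix m n src tgt i e = deltaCoef m n src tgt e S := by
  have h : ∀ i, incidenceMatrix m n src tgt i e
      = (if src e = i then (1 : ℝ) else 0) - (if tgt e = i then 1 else 0) := by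
    intro i
    simp only [incidenceMatrix, Matrix.of_apply]
    have := hst e
    split_ifs with h1 h2 <;> first | (exfalso; exact this (h1.trans h2.symm)) | norm_num
  simp only [h, Finset.sum_sub_distrib, Finset.sum_ite_eq, deltaCoef]
  by_cases h1 : src e ∈ S <;> by_cases h2 : tgt e ∈ S <;> simp [h1, h2]

/-- For a basic solution `x̄` associated with a basis `(B, L, U)`, the
subvector `x̃` of interdependent basic variables satisfies `D x̃ = b̃`, where `b̃` collects
the net requirements of the trees `T_1, …, T_{r−p}` and of the `p` interdependencies. -/
theorem basic_variables_solve_Dmat_system (m n p : ℕ) (src tgt : Fin n → Fin m) (hst : ∀ e, src e ≠ tgt e)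
    (parent child : Fin p → Fin n) (α : Fin p → ℝ)
    (hpc : ∀ k k' : Fin p, parent k ≠ child k')
    (hpinj : Function.Injective parent) (hcinj : Function.Injective child)
    (β : Fin p → ℝ) (b : Fin m → ℝ) (u : Fin n → ℝ)
    (B : Finset (Fin n ⊕ Fin p)) (hBcard : B.card = m + p - 1)
    (hBind : LinearIndependent ℝ (fun j : B =>
      (constraintMatrix m n p src tgt parent child α)ᵀ j.1))
    (r : ℕ) (hpr : p ≤ r)
    (T : Fin (r - p + 1) → Finset (Fin m))
    (hTdisj : ∀ h h' : Fin (r - p + 1), h ≠ h' → Disjoint (T h) (T h'))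
    (hTne : ∀ h, (T h).Nonempty)
    (hforest : NoIndepCycle m n p src tgt parent child B)
    (hTcomp : ∀ i j : Fin m,
      indepReach m n p src tgt parent child B i j ↔ ∃ h, i ∈ T h ∧ j ∈ T h)
    (col : Fin r → Fin n ⊕ Fin p)
    (hcolinj : Function.Injective col)
    (hcolrange : ∀ j : Fin n ⊕ Fin p,
      j ∈ Set.range col ↔ j ∈ B ∧ interVar n p parent child j)
    (L U : Finset (Fin n ⊕ Fin p))
    (hLU : Disjoint L U) (hLUcover : L ∪ U = Bᶜ)
    (hslackL : ∀ k : Fin p, Sum.inr k ∉ B → Sum.inr k ∈ L)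
    (xbar : Fin n ⊕ Fin p → ℝ)
    (hfeas : (constraintMatrix m n p src tgt parent child α).mulVec xbar = Sum.elim b β)
    (hxL : ∀ j ∈ L, xbar j = 0)
    (hxU : ∀ e : Fin n, Sum.inl e ∈ U → xbar (Sum.inl e) = u e) :
    (Dmat m n p src tgt parent child α r T col).mulVec (fun j => xbar (col j)) =
      Sum.elim
        (fun h : Fin (r - p) =>
          (∑ i ∈ T h.castSucc, b i)
          + (∑ e ∈ Finset.univ.filter (fun e : Fin n =>
              Sum.inl e ∈ U ∧ src e ∉ T h.castSucc ∧ tgt e ∈ T h.castSucc), u e)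
          - ∑ e ∈ Finset.univ.filter (fun e : Fin n =>
              Sum.inl e ∈ U ∧ src e ∈ T h.castSucc ∧ tgt e ∉ T h.castSucc), u e)
        (fun k : Fin p =>
          β k + (if Sum.inl (parent k) ∈ U then α k * u (parent k) else 0)
            - (if Sum.inl (child k) ∈ U then u (child k) else 0)) := by
  classical
  have key := key_sum n p parent child u B r col hcolinj hcolrange L U hLU hLUcover hslackL
    xbar hxL hxU
  funext row
  rcases row with h | k
  · set S := T h.castSucc with hS
    have hw : ∀ j ∈ B, ¬ interVar n p parent child j →
        (Sum.elim (fun e => deltaCoef m n src tgt e S) (fun _ => (0 : ℝ)) :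
          Fin n ⊕ Fin p → ℝ) j = 0 := by
      rintro (e | k) hj hv
      · have hre : indepReach m n p src tgt parent child B (src e) (tgt e) :=
          Relation.ReflTransGen.single ⟨e, hj, hv, Or.inl ⟨rfl, rfl⟩⟩
        obtain ⟨h', hs, ht⟩ := (hTcomp _ _).mp hre
        by_cases hh : h.castSucc = h'
        · subst hh
          simp [deltaCoef, hS, hs, ht]
        · have hd := hTdisj _ _ hh
          have a1 : src e ∉ S := fun q => Finset.disjoint_left.mp hd q hs
          have a2 : tgt e ∉ S := fun q => Finset.disjoint_left.mp hd q ht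
          simp [deltaCoef, a1, a2]
      · rfl
    have hk := key _ hw
    have hb : ∑ i ∈ S, b i = ∑ e, deltaCoef m n src tgt e S * xbar (Sum.inl e) := by
      have : ∀ i, b i = ∑ e, incidenceMatrix m n src tgt i e * xbar (Sum.inl e) := by
        intro i
        have := congrFun hfeas (Sum.inl i)
        simp only [Sum.elim_inl] at this
        rw [← this]
        simp [Matrix.mulVec, dotProduct, constraintMatrix, Fintype.sum_sum_type]
      simp only [this]
      rw [Finset.sum_comm]
      refine Finset.sum_congr rfl fun e _ => ?_
      rw [← Finset.sum_mul, sum_incidence m n src tgt hst]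
    have hD : (Dmat m n p src tgt parent child α r T col).mulVec (fun j => xbar (col j))
        (Sum.inl h) = ∑ i, (Sum.elim (fun e => deltaCoef m n src tgt e S) (fun _ => (0 : ℝ)) :
          Fin n ⊕ Fin p → ℝ) (col i) * xbar (col i) := by
      simp only [Matrix.mulVec, dotProduct]
      refine Finset.sum_congr rfl fun i _ => ?_
      congr 1
      simp only [Dmat, Matrix.of_apply]
      rcases col i with e | k <;> rfl
    rw [hD, hk, Fintype.sum_sum_type]
    simp only [Sum.elim_inl, Sum.elim_inr, zero_mul, Finset.sum_const_zero, add_zero]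
    rw [← hb, Finset.sum_filter, Finset.sum_filter, add_sub_assoc, ← Finset.sum_sub_distrib,
      sub_eq_add_neg, ← Finset.sum_neg_distrib]
    congr 1
    refine Finset.sum_congr rfl fun e _ => ?_
    simp only [deltaCoef, ← hS]
    by_cases h0 : Sum.inl e ∈ U <;> by_cases h1 : src e ∈ S <;> by_cases h2 : tgt e ∈ S <;>
      simp [h0, h1, h2]
  · have hw : ∀ j ∈ B, ¬ interVar n p parent child j →
        constraintMatrix m n p src tgt parent child α (Sum.inr k) j = 0 := by
      rintro (e | k') hj hv
      · have a1 : e ≠ parent k := fun q => hv ⟨k, Or.inl q.symm⟩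
        have a2 : e ≠ child k := fun q => hv ⟨k, Or.inr q.symm⟩
        simp [constraintMatrix, interMatrix, a1, a2]
      · exact absurd trivial hv
    have hk := key _ hw
    have hb : ∑ j, constraintMatrix m n p src tgt parent child α (Sum.inr k) j * xbar j = β k :=
      congrFun hfeas (Sum.inr k)
    have hD : (Dmat m n p src tgt parent child α r T col).mulVec (fun j => xbar (col j))
        (Sum.inr k) = ∑ i, constraintMatrix m n p src tgt parent child α (Sum.inr k) (col i)
          * xbar (col i) := by
      simp only [Matrix.mulVec, dotProduct]
      refine Finset.sum_congr rfl fun i _ => ?_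
      congr 1
      simp only [Dmat, Matrix.of_apply]
      rcases col i with e | k'
      · rfl
      · simp [constraintMatrix, Matrix.one_apply]
    rw [hD, hk, hb]
    simp only [Sum.elim_inr]
    have hs : (∑ e, if Sum.inl e ∈ U then
        constraintMatrix m n p src tgt parent child α (Sum.inr k) (Sum.inl e) * u e else 0)
        = ∑ e, ((if e = parent k then
            -(if Sum.inl (parent k) ∈ U then α k * u (parent k) else 0) else 0)
          + (if e = child k then
            (if Sum.inl (child k) ∈ U then u (child k) else 0) else 0)) := by
      refine Finset.sum_congr rfl fun e _ => ?_
      simp only [constraintMatrix, Matrix.fromBlocks_apply₂₁, interMatrix, Matrix.of_apply]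
      have hne := hpc k k
      by_cases h1 : e = parent k
      · subst h1
        by_cases h0 : Sum.inl (parent k) ∈ U <;> simp [h0, hne]
      · by_cases h2 : e = child k
        · subst h2
          by_cases h0 : Sum.inl (child k) ∈ U <;> simp [h0, h1]
        · simp [h1, h2]
    rw [hs, Finset.sum_add_distrib]
    simp only [Finset.sum_ite_eq', Finset.mem_univ, if_true]
    ring
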